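/- Let ν ≥ 1 be an integer and (M_k)_{k∈ℕ} a sequence of positive reals satisfying (M.0), (M.2) with constants A ≥ 1, H ≥ 1 and (G), with associated function M(r) := sup_{k∈ℕ} log(r^{νk}/M_{νk}). Let (λ_l)_{l≥1} be positive reals with λ_l ≥ λ₁ > 0 for all l and ∑_{l≥1} λ_l^{−p₀} < ∞ for some p₀ ∈ ℕ, and let (b_l)_{l≥1} be nonnegative reals. Then the following are equivalent: (a) there exists L > 0 such that ∑_{l≥1} exp(−M(L·λ_l^{1/ν}))·b_l < ∞; (b) there exist L > 0 and K > 0 such that b_l ≤ K·exp(M(L·λ_l^{1/ν})) for all l ≥ 1. -/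

import Mathlib

/-- The associated function `M(r) = sup_{k ∈ ℕ} log ( r^{νk} / M_{νk} )`. -/
noncomputable def assocM (ν : ℕ) (Mk : ℕ → ℝ) (r : ℝ) : ℝ :=
  ⨆ k : ℕ, Real.log (r ^ (ν * k) / Mk (ν * k))

/-!
The terms of a convergent series of nonnegative numbers are bounded, which gives (a) ⇒ (b) with the
same `L`. Conversely, (M.2) yields `2 M(r) ≤ log A + M(H r)`, so replacing `L` by `H L` gains a
factor `exp (-M(r))`. Each single index `k` in the supremum gives `exp (-M(r)) ≤ M_{νk} / r^{νk}`;
at `r = L λ^{1/ν}` and `k = p₀` the right-hand side is a constant multiple of `λ^{-p₀}`.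
-/

open Real

section Summation

variable {ι : Type*} {b f : ι → ℝ}

theorem exists_le_mul_exp_of_summable_exp_neg_mul (hb : ∀ i, 0 ≤ b i)
    (hs : Summable fun i => exp (-f i) * b i) : ∃ K > 0, ∀ i, b i ≤ K * exp (f i) := by
  have hterm (i : ι) : 0 ≤ exp (-f i) * b i := mul_nonneg (exp_pos _).le (hb i)
  have hsum : 0 ≤ ∑' i, exp (-f i) * b i := tsum_nonneg hterm
  refine ⟨∑' i, exp (-f i) * b i + 1, by linarith, fun i => ?_⟩
  have hle : exp (-f i) * b i ≤ ∑' i, exp (-f i) * b i := hs.le_tsum i fun j _ => hterm j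
  calc b i = exp (-f i) * b i * exp (f i) := by
        rw [mul_right_comm, ← exp_add, neg_add_cancel, exp_zero, one_mul]
    _ ≤ (∑' i, exp (-f i) * b i + 1) * exp (f i) := by
        gcongr
        linarith

theorem summable_exp_neg_mul_of_le_mul_exp {g w : ι → ℝ} {K : ℝ} (hK : 0 ≤ K)
    (hb : ∀ i, 0 ≤ b i) (hbf : ∀ i, b i ≤ K * exp (f i))
    (hfg : ∀ i, exp (f i) ≤ w i * exp (g i)) (hw : Summable w) :
    Summable fun i => exp (-g i) * b i := by
  refine .of_nonneg_of_le (fun i => mul_nonneg (exp_pos _).le (hb i)) (fun i => ?_)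
    (hw.mul_left K)
  calc exp (-g i) * b i ≤ exp (-g i) * (K * (w i * exp (g i))) := by
        gcongr
        exact (hbf i).trans (mul_le_mul_of_nonneg_left (hfg i) hK)
    _ = K * w i * (exp (-g i) * exp (g i)) := by ring
    _ = K * w i := by rw [← exp_add, neg_add_cancel, exp_zero, mul_one]

end Summation

theorem mul_rpow_one_div_pow_mul {ν : ℕ} (hν : ν ≠ 0) {x : ℝ} (hx : 0 ≤ x) (L : ℝ) (p : ℕ) :
    (L * x ^ (1 / (ν : ℝ))) ^ (ν * p) = L ^ (ν * p) * x ^ p := by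
  rw [mul_pow, pow_mul (x ^ (1 / (ν : ℝ))), one_div, rpow_inv_natCast_pow hx hν]

theorem pow_div_le_mul_exp_of_factorial_le {C l m r : ℝ} {k : ℕ} (hC : 0 ≤ C) (hl : 0 ≤ l)
    (hm : 0 < m) (hr : 0 ≤ r) (hk : (k.factorial : ℝ) ≤ C * l ^ k * m) :
    r ^ k / m ≤ C * exp (l * r) := by
  calc r ^ k / m ≤ C * ((l * r) ^ k / k.factorial) := by
        rw [← mul_div_assoc, div_le_div_iff₀ hm (by positivity), mul_pow]
        linarith [mul_le_mul_of_nonneg_left hk (pow_nonneg hr k)]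
    _ ≤ C * exp (l * r) := by
        gcongr
        exact pow_div_factorial_le_exp (l * r) (by positivity) k

theorem two_mul_log_pow_div_le {A H m m' r : ℝ} {k : ℕ} (hA : 0 < A) (hH : 0 < H)
    (hm : 0 < m) (hm' : 0 < m') (hr : 0 < r) (h : m' ≤ A * H ^ (2 * k) * m ^ 2) :
    2 * log (r ^ k / m) ≤ log A + log ((H * r) ^ (2 * k) / m') := by
  have hsq : (r ^ k / m) ^ 2 ≤ A * ((H * r) ^ (2 * k) / m') := by
    rw [div_pow, ← mul_div_assoc, div_le_div_iff₀ (by positivity) hm', mul_pow, ← pow_mul,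
      mul_comm k 2]
    linarith [mul_le_mul_of_nonneg_left h (pow_pos hr (2 * k)).le]
  calc 2 * log (r ^ k / m) = log ((r ^ k / m) ^ 2) := by rw [log_pow, Nat.cast_ofNat]
    _ ≤ log (A * ((H * r) ^ (2 * k) / m')) := log_le_log (by positivity) hsq
    _ = log A + log ((H * r) ^ (2 * k) / m') := log_mul (by positivity) (by positivity)

section AssociatedFunction

variable {ν : ℕ} {Mk : ℕ → ℝ} {r : ℝ}

theorem bddAbove_log_pow_div_of_factorial_le {C l : ℝ} (hMpos : ∀ k, 0 < Mk k) (hC : 0 ≤ C)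
    (hl : 0 ≤ l) (hG : ∀ k : ℕ, (k.factorial : ℝ) ≤ C * l ^ k * Mk k) (hr : 0 < r) :
    BddAbove (Set.range fun k : ℕ => log (r ^ (ν * k) / Mk (ν * k))) := by
  refine ⟨log (C * exp (l * r)), ?_⟩
  rintro _ ⟨k, rfl⟩
  exact log_le_log (div_pos (pow_pos hr _) (hMpos _))
    (pow_div_le_mul_exp_of_factorial_le hC hl (hMpos _) hr.le (hG _))

theorem pow_div_le_exp_assocM (hMpos : ∀ k, 0 < Mk k) (hr : 0 < r)
    (hbdd : BddAbove (Set.range fun k : ℕ => log (r ^ (ν * k) / Mk (ν * k)))) (k : ℕ) :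
    r ^ (ν * k) / Mk (ν * k) ≤ exp (assocM ν Mk r) :=
  (log_le_iff_le_exp (div_pos (pow_pos hr _) (hMpos _))).mp (le_ciSup hbdd k)

variable {A H : ℝ}

theorem two_mul_assocM_le (hMpos : ∀ k, 0 < Mk k) (hA : 0 < A) (hH : 0 < H)
    (hM2 : ∀ k : ℕ, Mk (2 * k) ≤ A * H ^ (2 * k) * Mk k ^ 2) (hr : 0 < r)
    (hbdd : BddAbove (Set.range fun k : ℕ => log ((H * r) ^ (ν * k) / Mk (ν * k)))) :
    2 * assocM ν Mk r ≤ log A + assocM ν Mk (H * r) := by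
  suffices h : assocM ν Mk r ≤ (log A + assocM ν Mk (H * r)) / 2 by linarith
  refine ciSup_le fun k => ?_
  have hterm := two_mul_log_pow_div_le hA hH (hMpos _) (hMpos _) hr (hM2 (ν * k))
  have hsup : log ((H * r) ^ (2 * (ν * k)) / Mk (2 * (ν * k))) ≤ assocM ν Mk (H * r) := by
    rw [mul_left_comm]
    exact le_ciSup hbdd (2 * k)
  linarith

theorem exp_assocM_le_mul_exp_assocM_mul (hMpos : ∀ k, 0 < Mk k) (hA : 0 < A) (hH : 0 < H)
    (hM2 : ∀ k : ℕ, Mk (2 * k) ≤ A * H ^ (2 * k) * Mk k ^ 2)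
    (hbdd : ∀ r > 0, BddAbove (Set.range fun k : ℕ => log (r ^ (ν * k) / Mk (ν * k))))
    (hr : 0 < r) (k : ℕ) :
    exp (assocM ν Mk r) ≤ A * (Mk (ν * k) / r ^ (ν * k)) * exp (assocM ν Mk (H * r)) := by
  have hM : 0 < Mk (ν * k) := hMpos _
  have hmul : exp (assocM ν Mk r) * (r ^ (ν * k) / Mk (ν * k)) ≤
      A * exp (assocM ν Mk (H * r)) :=
    calc exp (assocM ν Mk r) * (r ^ (ν * k) / Mk (ν * k))
        ≤ exp (assocM ν Mk r) * exp (assocM ν Mk r) := by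
          gcongr
          exact pow_div_le_exp_assocM hMpos hr (hbdd r hr) k
      _ = exp (2 * assocM ν Mk r) := by rw [two_mul, exp_add]
      _ ≤ exp (log A + assocM ν Mk (H * r)) :=
          exp_le_exp.mpr (two_mul_assocM_le hMpos hA hH hM2 hr (hbdd _ (mul_pos hH hr)))
      _ = A * exp (assocM ν Mk (H * r)) := by rw [exp_add, exp_log hA]
  calc exp (assocM ν Mk r)
      ≤ A * exp (assocM ν Mk (H * r)) / (r ^ (ν * k) / Mk (ν * k)) :=
        (le_div_iff₀ (by positivity)).mpr hmul
    _ = A * (Mk (ν * k) / r ^ (ν * k)) * exp (assocM ν Mk (H * r)) := by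
        rw [div_eq_mul_inv, inv_div, mul_right_comm]

end AssociatedFunction

theorem stmt_17_general {ι : Type*} {ν : ℕ} (hν : ν ≠ 0) {Mk : ℕ → ℝ} (hMpos : ∀ k, 0 < Mk k)
    {A H : ℝ} (hA : 0 < A) (hH : 0 < H)
    (hM2 : ∀ k : ℕ, Mk (2 * k) ≤ A * H ^ (2 * k) * Mk k ^ 2)
    (hbdd : ∀ r > 0, BddAbove (Set.range fun k : ℕ => log (r ^ (ν * k) / Mk (ν * k))))
    {lam : ι → ℝ} (hlam : ∀ i, 0 < lam i)
    {p₀ : ℕ} (hp₀ : Summable fun i => 1 / lam i ^ p₀)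
    {b : ι → ℝ} (hb : ∀ i, 0 ≤ b i) :
    (∃ L > (0 : ℝ), Summable fun i => exp (-assocM ν Mk (L * lam i ^ (1 / (ν : ℝ)))) * b i) ↔
      ∃ L > (0 : ℝ), ∃ K > (0 : ℝ), ∀ i,
        b i ≤ K * exp (assocM ν Mk (L * lam i ^ (1 / (ν : ℝ)))) := by
  constructor
  · rintro ⟨L, hL, hs⟩
    exact ⟨L, hL, exists_le_mul_exp_of_summable_exp_neg_mul hb hs⟩
  · rintro ⟨L, hL, K, hK, hbK⟩
    refine ⟨H * L, mul_pos hH hL, summable_exp_neg_mul_of_le_mul_exp hK.le hb hbK (fun i => ?_)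
      (hp₀.mul_left (A * (Mk (ν * p₀) / L ^ (ν * p₀))))⟩
    have hr : 0 < L * lam i ^ (1 / (ν : ℝ)) := mul_pos hL (rpow_pos_of_pos (hlam i) _)
    have hexp := exp_assocM_le_mul_exp_assocM_mul hMpos hA hH hM2 hbdd hr p₀
    rwa [mul_rpow_one_div_pow_mul hν (hlam i).le, ← div_div, div_eq_mul_one_div _ (lam i ^ p₀),
      ← mul_assoc A, ← mul_assoc H] at hexp

theorem stmt_17 (ν : ℕ) (hν : 1 ≤ ν) (Mk : ℕ → ℝ) (hMpos : ∀ k, 0 < Mk k)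
    (hM0 : Mk 0 = 1)
    (A H : ℝ) (hA : 1 ≤ A) (hH : 1 ≤ H)
    (hM2 : ∀ k : ℕ, Mk (2 * k) ≤ A * H ^ (2 * k) * Mk k ^ 2)
    (hG : ∃ C₀ > (0 : ℝ), ∃ l > (0 : ℝ), ∀ k : ℕ, (k.factorial : ℝ) ≤ C₀ * l ^ k * Mk k)
    (lam : ℕ → ℝ) (hlam : ∀ l, 0 < lam l) (hlb : ∀ l, lam 0 ≤ lam l)
    (p₀ : ℕ) (hp₀ : Summable (fun l => 1 / lam l ^ p₀))
    (b : ℕ → ℝ) (hb : ∀ l, 0 ≤ b l) :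
    (∃ L > (0 : ℝ),
        Summable (fun l => Real.exp (-(assocM ν Mk (L * lam l ^ (1 / (ν : ℝ))))) * b l)) ↔
    (∃ L > (0 : ℝ), ∃ K > (0 : ℝ), ∀ l,
        b l ≤ K * Real.exp (assocM ν Mk (L * lam l ^ (1 / (ν : ℝ))))) := by
  obtain ⟨C₀, hC₀, l, hl, hG⟩ := hG
  exact stmt_17_general (Nat.one_le_iff_ne_zero.mp hν) hMpos (by linarith) (by linarith) hM2
    (fun _ hr => bddAbove_log_pow_div_of_factorial_le hMpos hC₀.le hl.le hG hr) hlam hp₀ hb
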